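/- For every n ≥ 2, the pattern counts of the Sierpiński triangle satisfy A_{2n} + 6 = A_n + 3·B_{n+1} and A_{2n+1} + 6 = 3·A_{n+1} + D_{n+2}. -/

import Mathlib

/-- Whether the unit triangle at row `r`, column `c` of the Sierpiński triangle is filled:
upward units `(r, 2j)` are filled iff `choose r j` is odd; downward units are unfilled. -/
def filled (r c : ℕ) : Bool :=
  decide (c % 2 = 0 ∧ Nat.choose r (c / 2) % 2 = 1)

/-- The upward pattern of size `n` at upward position `(r, c)`. -/
def upPattern (n r c : ℕ) : ℕ × ℕ → Bool := fun q =>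
  if q.1 < n ∧ q.2 ≤ 2 * q.1 then filled (r + q.1) (c + q.2) else false

/-- The set of all upward patterns of size `n` occurring in the Sierpiński triangle. -/
def Pup (n : ℕ) : Set (ℕ × ℕ → Bool) :=
  { p | ∃ r c : ℕ, c % 2 = 0 ∧ c ≤ 2 * r ∧ p = upPattern n r c }

/-- The downward pattern of size `n` at downward position `(r, c)`. -/
def downPattern (n r c : ℕ) : ℕ × ℕ → Bool := fun q =>
  if q.1 < n ∧ q.2 ≤ 2 * (n - 1 - q.1) then filled (r + q.1) (c + 2 * q.1 + q.2) else false

/-- The set of all downward patterns of size `n` occurring in the Sierpiński triangle. -/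
def Pdown (n : ℕ) : Set (ℕ × ℕ → Bool) :=
  { p | ∃ r c : ℕ, c % 2 = 1 ∧ c + 2 * (n - 1) ≤ 2 * r ∧ p = downPattern n r c }

/-- The top-cut pattern of size `n` at upward position `(r, c)` (apex unit removed). -/
def topCutPattern (n r c : ℕ) : ℕ × ℕ → Bool := fun q =>
  if 1 ≤ q.1 ∧ q.1 < n ∧ q.2 ≤ 2 * q.1 then filled (r + q.1) (c + q.2) else false

/-- The set of all top-cut patterns of size `n` occurring in the Sierpiński triangle. -/
def PtopCut (n : ℕ) : Set (ℕ × ℕ → Bool) :=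
  { p | ∃ r c : ℕ, c % 2 = 0 ∧ c ≤ 2 * r ∧ p = topCutPattern n r c }

/-- The bottom-cut pattern of size `n` at upward position `(r, c)`
(both bottom corner units removed). -/
def botCutPattern (n r c : ℕ) : ℕ × ℕ → Bool := fun q =>
  if (q.1 < n ∧ q.2 ≤ 2 * q.1) ∧ ¬(q.1 = n - 1 ∧ (q.2 = 0 ∨ q.2 = 2 * (n - 1)))
  then filled (r + q.1) (c + q.2) else false

/-- The set of all bottom-cut patterns of size `n` occurring in the Sierpiński triangle. -/
def PbotCut (n : ℕ) : Set (ℕ × ℕ → Bool) :=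
  { p | ∃ r c : ℕ, c % 2 = 0 ∧ c ≤ 2 * r ∧ p = botCutPattern n r c }

/-- The fully-cut pattern of size `n` at upward position `(r, c)`
(all three corner units removed). -/
def fullyCutPattern (n r c : ℕ) : ℕ × ℕ → Bool := fun q =>
  if (q.1 < n ∧ q.2 ≤ 2 * q.1) ∧ q ≠ (0, 0) ∧ ¬(q.1 = n - 1 ∧ (q.2 = 0 ∨ q.2 = 2 * (n - 1)))
  then filled (r + q.1) (c + q.2) else false

/-- The set of all fully-cut patterns of size `n` occurring in the Sierpiński triangle. -/
def PfullyCut (n : ℕ) : Set (ℕ × ℕ → Bool) :=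
  { p | ∃ r c : ℕ, c % 2 = 0 ∧ c ≤ 2 * r ∧ p = fullyCutPattern n r c }

/-- Upward patterns of size `m` occurring inside the approximation `T_N`
(rows `0, …, 2^N - 1`). -/
def PupN (N m : ℕ) : Set (ℕ × ℕ → Bool) :=
  { p | ∃ r c : ℕ, c % 2 = 0 ∧ c ≤ 2 * r ∧ r + m ≤ 2 ^ N ∧ p = upPattern m r c }

/-- Upward patterns of size `n` at positions with `r ≡ ρ [MOD 2]` and `c ≡ γ [MOD 4]`. -/
def PupRC (n ρ γ : ℕ) : Set (ℕ × ℕ → Bool) :=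
  { p | ∃ r c : ℕ, c % 2 = 0 ∧ c ≤ 2 * r ∧ r % 2 = ρ ∧ c % 4 = γ ∧ p = upPattern n r c }

/-- Downward patterns of size `n` at positions with `r ≡ ρ [MOD 2]` and `c ≡ γ [MOD 4]`. -/
def PdownRC (n ρ γ : ℕ) : Set (ℕ × ℕ → Bool) :=
  { p | ∃ r c : ℕ, c % 2 = 1 ∧ c + 2 * (n - 1) ≤ 2 * r ∧ r % 2 = ρ ∧ c % 4 = γ ∧
      p = downPattern n r c }

/-- Top-cut patterns of size `n` at positions with `r ≡ ρ [MOD 2]` and `c ≡ γ [MOD 4]`. -/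
def PtopCutRC (n ρ γ : ℕ) : Set (ℕ × ℕ → Bool) :=
  { p | ∃ r c : ℕ, c % 2 = 0 ∧ c ≤ 2 * r ∧ r % 2 = ρ ∧ c % 4 = γ ∧ p = topCutPattern n r c }

/-- Fully-cut patterns of size `n` at positions with `r ≡ ρ [MOD 2]` and `c ≡ γ [MOD 4]`. -/
def PfullyCutRC (n ρ γ : ℕ) : Set (ℕ × ℕ → Bool) :=
  { p | ∃ r c : ℕ, c % 2 = 0 ∧ c ≤ 2 * r ∧ r % 2 = ρ ∧ c % 4 = γ ∧ p = fullyCutPattern n r c }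

/-- The everywhere-unfilled upward pattern. -/
def blankUp : ℕ × ℕ → Bool := fun _ => false

/-- The upward pattern that is filled exactly at the apex `(0, 0)`. -/
def topUp : ℕ × ℕ → Bool := fun q => decide (q = (0, 0))

/-- The size-`N` upward pattern that is filled exactly at the bottom-left corner `(N-1, 0)`. -/
def botleftUp (N : ℕ) : ℕ × ℕ → Bool := fun q => decide (q = (N - 1, 0))

/-- The size-`N` upward pattern filled exactly at the bottom-right corner `(N-1, 2(N-1))`. -/
def botrightUp (N : ℕ) : ℕ × ℕ → Bool := fun q => decide (q = (N - 1, 2 * (N - 1)))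

/-- The everywhere-unfilled downward pattern. -/
def blankDown : ℕ × ℕ → Bool := fun _ => false

/-- The size-`N` downward pattern filled exactly at the upward units along the top side:
positions `(0, m)` with `m` odd, `1 ≤ m ≤ 2N - 3`. -/
def topsideDown (N : ℕ) : ℕ × ℕ → Bool := fun q =>
  decide (q.1 = 0 ∧ q.2 % 2 = 1 ∧ 1 ≤ q.2 ∧ q.2 ≤ 2 * N - 3)

/-- The size-`N` downward pattern filled exactly at the upward units along the left side:
positions `(k, 1)` with `0 ≤ k ≤ N - 2`. -/
def leftsideDown (N : ℕ) : ℕ × ℕ → Bool := fun q =>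
  decide (q.2 = 1 ∧ q.1 ≤ N - 2)

/-- The size-`N` downward pattern filled exactly at the upward units along the right side:
positions `(k, 2(N-1-k) - 1)` with `0 ≤ k ≤ N - 2`. -/
def rightsideDown (N : ℕ) : ℕ × ℕ → Bool := fun q =>
  decide (q.1 ≤ N - 2 ∧ q.2 = 2 * (N - 1 - q.1) - 1)

/-!
Place the upward unit in row `x + y` with `x` upward units to its left at `(x, y)`. By Lucas'
theorem it is filled iff adding `x` and `y` in base two produces no carry, so at positions of a
fixed parity a pattern of size `N` is the substitution applied to a pattern of about half the size,
seen through a window that is a full triangle for parity `(0, 0)` and a cut triangle for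
parity `(1, 1)`. Rotating by a third of a turn shows that three of the four parity classes are
equinumerous. Finally, a pattern belongs to exactly one class, except for the blank pattern, which
belongs to all four, and the three patterns with a single filled unit at a corner, which belong to
two each; so the class sizes add up to the number of patterns plus `3 + 3 = 6`.
-/

open Finset

namespace Sierpinski

/-- The upward unit in row `x + y` with `x` upward units to its left is filled. In these
coordinates the units `(x + 1, y)` and `(x, y + 1)` lie directly below `(x, y)`. -/
def IsFilled (x y : ℕ) : Prop := Odd ((x + y).choose x)

instance (x y : ℕ) : Decidable (IsFilled x y) := inferInstanceAs (Decidable (Odd _))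

-- Lucas' theorem modulo 2; a carry occurs in `x + y` exactly when both last digits are 1.
lemma isFilled_iff_div_two (x y : ℕ) :
    IsFilled x y ↔ IsFilled (x / 2) (y / 2) ∧ ¬(x % 2 = 1 ∧ y % 2 = 1) := by
  have lucas := Choose.choose_modEq_choose_mod_mul_choose_div_nat (n := x + y) (k := x) (p := 2)
  unfold IsFilled
  rw [Nat.odd_iff, Nat.odd_iff, lucas]
  by_cases carry : x % 2 = 1 ∧ y % 2 = 1
  · have : (x + y) % 2 = 0 := by lia
    simp [carry, this]
  · have digit : ((x + y) % 2).choose (x % 2) = 1 := by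
      rcases Nat.mod_two_eq_zero_or_one x with hx | hx
      · simp [hx]
      · have : (x + y) % 2 = 1 := by lia
        simp [hx, this]
    have : (x + y) / 2 = x / 2 + y / 2 := by lia
    simp [digit, carry, this]

lemma isFilled_rotate {s x y z : ℕ} (h : x + y + z + 1 = 2 ^ s) :
    IsFilled x y ↔ IsFilled z x := by
  induction s generalizing x y z with
  | zero =>
    obtain ⟨rfl, rfl, rfl⟩ : x = 0 ∧ y = 0 ∧ z = 0 := by lia
    rfl
  | succ s ih =>
    rw [pow_succ] at h
    rw [isFilled_iff_div_two x y, isFilled_iff_div_two z x]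
    -- The last digits sum to an odd number, so they are all 1 or only one of them is.
    by_cases ones : x % 2 = 1 ∧ y % 2 = 1
    · have : z % 2 = 1 := by lia
      simp [ones, this]
    · have : ¬(z % 2 = 1 ∧ x % 2 = 1) := by lia
      rw [ih (z := z / 2) (by lia)]
      simp [ones, this]

lemma isFilled_of_add_add_one_eq_two_pow {s x y : ℕ} (h : x + y + 1 = 2 ^ s) :
    IsFilled x y := by
  rw [isFilled_rotate (z := 0) (by lia : x + y + 0 + 1 = 2 ^ s)]
  simp [IsFilled]

lemma not_isFilled_of_two_pow_le_add {s x y : ℕ} (hx : x < 2 ^ s) (hy : y < 2 ^ s)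
    (h : 2 ^ s ≤ x + y) : ¬IsFilled x y := by
  induction s generalizing x y with
  | zero => lia
  | succ s ih =>
    rw [pow_succ] at hx hy h
    rw [isFilled_iff_div_two]
    rintro ⟨hfilled, hcarry⟩
    exact ih (by lia) (by lia) (by lia) hfilled

/-- The pattern seen at `(x, y)` through a finite window `C` of upward units, recorded as the set
of those `(u, v) ∈ C` for which the unit `(x + u, y + v)` is filled. -/
def pattern (C : Finset (ℕ × ℕ)) (x y : ℕ) : Finset (ℕ × ℕ) :=
  {q ∈ C | IsFilled (x + q.1) (y + q.2)}

open scoped Classical in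
/-- All patterns that occur through the window `C`. -/
noncomputable def patterns (C : Finset (ℕ × ℕ)) : Finset (Finset (ℕ × ℕ)) :=
  {p ∈ C.powerset | ∃ x y, pattern C x y = p}

open scoped Classical in
/-- The patterns that occur through `C` at positions congruent to `(a, b)` modulo `2`; used with
`a, b < 2`. -/
noncomputable def parityClass (C : Finset (ℕ × ℕ)) (a b : ℕ) : Finset (Finset (ℕ × ℕ)) :=
  {p ∈ C.powerset | ∃ x y, pattern C (2 * x + a) (2 * y + b) = p}

variable {C p : Finset (ℕ × ℕ)} {a b a' b' x y u v u' v' n N : ℕ}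

@[simp] lemma mem_pattern {q : ℕ × ℕ} :
    q ∈ pattern C x y ↔ q ∈ C ∧ IsFilled (x + q.1) (y + q.2) :=
  mem_filter

lemma pattern_subset : pattern C x y ⊆ C :=
  filter_subset _ _

lemma mem_patterns : p ∈ patterns C ↔ ∃ x y, pattern C x y = p := by
  simp only [patterns, mem_filter, mem_powerset, and_iff_right_iff_imp]
  rintro ⟨x, y, rfl⟩
  exact pattern_subset

lemma mem_parityClass :
    p ∈ parityClass C a b ↔ ∃ x y, pattern C (2 * x + a) (2 * y + b) = p := by
  simp only [parityClass, mem_filter, mem_powerset, and_iff_right_iff_imp]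
  rintro ⟨x, y, rfl⟩
  exact pattern_subset

lemma subset_of_mem_patterns (hp : p ∈ patterns C) : p ⊆ C := by
  obtain ⟨x, y, rfl⟩ := mem_patterns.1 hp
  exact pattern_subset

lemma mem_patterns_of_mem_parityClass (hp : p ∈ parityClass C a b) : p ∈ patterns C := by
  obtain ⟨x, y, rfl⟩ := mem_parityClass.1 hp
  exact mem_patterns.2 ⟨_, _, rfl⟩

lemma exists_mem_parityClass (hp : p ∈ patterns C) :
    ∃ a < 2, ∃ b < 2, p ∈ parityClass C a b := by
  obtain ⟨x, y, rfl⟩ := mem_patterns.1 hp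
  refine ⟨x % 2, x.mod_lt two_pos, y % 2, y.mod_lt two_pos,
    mem_parityClass.2 ⟨x / 2, y / 2, ?_⟩⟩
  rw [Nat.div_add_mod, Nat.div_add_mod]

/-! ### Contracting a parity class -/

/-- The units of the half-size triangle seen through the window `C` from a position congruent to
`(a, b)`: the substitution replaces the unit `(x, y)` by the units `(2x, 2y)`, `(2x + 1, 2y)`,
`(2x, 2y + 1)` and the unfilled `(2x + 1, 2y + 1)`. -/
def contract (C : Finset (ℕ × ℕ)) (a b : ℕ) : Finset (ℕ × ℕ) :=
  {q ∈ C | ¬((q.1 + a) % 2 = 1 ∧ (q.2 + b) % 2 = 1)}.image fun q => ((q.1 + a) / 2, (q.2 + b) / 2)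

/-- The substitution applied to a pattern on `contract C a b`. -/
def expand (C : Finset (ℕ × ℕ)) (a b : ℕ) (p : Finset (ℕ × ℕ)) : Finset (ℕ × ℕ) :=
  {q ∈ C | ¬((q.1 + a) % 2 = 1 ∧ (q.2 + b) % 2 = 1) ∧ ((q.1 + a) / 2, (q.2 + b) / 2) ∈ p}

lemma isFilled_two_mul_add : IsFilled (2 * x + a + u) (2 * y + b + v) ↔
    IsFilled (x + (u + a) / 2) (y + (v + b) / 2) ∧ ¬((u + a) % 2 = 1 ∧ (v + b) % 2 = 1) := by
  rw [isFilled_iff_div_two, show (2 * x + a + u) / 2 = x + (u + a) / 2 by lia,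
    show (2 * y + b + v) / 2 = y + (v + b) / 2 by lia,
    show (2 * x + a + u) % 2 = (u + a) % 2 by lia, show (2 * y + b + v) % 2 = (v + b) % 2 by lia]

lemma mem_contract : (u, v) ∈ contract C a b ↔ ∃ q ∈ C,
    ¬((q.1 + a) % 2 = 1 ∧ (q.2 + b) % 2 = 1) ∧ (q.1 + a) / 2 = u ∧ (q.2 + b) / 2 = v := by
  simp [contract, and_assoc]

lemma expand_pattern_contract :
    expand C a b (pattern (contract C a b) x y) = pattern C (2 * x + a) (2 * y + b) := by
  ext ⟨u, v⟩
  simp only [expand, mem_filter, mem_pattern, isFilled_two_mul_add, mem_contract]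
  grind

lemma expand_injOn : Set.InjOn (expand C a b) (patterns (contract C a b)) := by
  refine Set.LeftInvOn.injOn
    (f₁' := fun s => s.image fun q => ((q.1 + a) / 2, (q.2 + b) / 2)) fun p hp => ?_
  have hpC := subset_of_mem_patterns hp
  ext q
  refine ⟨?_, fun hq => ?_⟩
  · simp only [expand, mem_image, mem_filter]
    rintro ⟨q', ⟨-, -, hq'⟩, rfl⟩
    exact hq'
  · obtain ⟨q', hq'C, hcarry, hu, hv⟩ := mem_contract.1 (hpC hq)
    have hq' : ((q'.1 + a) / 2, (q'.2 + b) / 2) = q := by rw [hu, hv]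
    exact mem_image.2 ⟨q', mem_filter.2 ⟨hq'C, hcarry, by rwa [hq']⟩, hq'⟩

theorem card_parityClass : #(parityClass C a b) = #(patterns (contract C a b)) := by
  rw [← card_image_of_injOn expand_injOn]
  congr 1
  ext p
  simp only [mem_parityClass, mem_image, mem_patterns]
  constructor
  · rintro ⟨x, y, rfl⟩
    exact ⟨_, ⟨x, y, rfl⟩, expand_pattern_contract⟩
  · rintro ⟨_, ⟨x, y, rfl⟩, rfl⟩
    exact ⟨x, y, expand_pattern_contract.symm⟩

/-- The upward triangle with `N` rows, its apex at `(0, 0)`. -/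
def triangle (N : ℕ) : Finset (ℕ × ℕ) := {q ∈ range N ×ˢ range N | q.1 + q.2 < N}

@[simp] lemma mem_triangle {q : ℕ × ℕ} : q ∈ triangle N ↔ q.1 + q.2 < N := by
  simp only [triangle, mem_filter, mem_product, mem_range, and_iff_right_iff_imp]
  lia

lemma exists_mem_triangle_of_digits (c d : ℕ) (hcd : c + d ≤ 1) (hc : a ≤ 2 * u + c)
    (hd : b ≤ 2 * v + d) (hN : 2 * u + c + (2 * v + d) < N + a + b) :
    ∃ q ∈ triangle N,
      ¬((q.1 + a) % 2 = 1 ∧ (q.2 + b) % 2 = 1) ∧ (q.1 + a) / 2 = u ∧ (q.2 + b) / 2 = v :=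
  ⟨(2 * u + c - a, 2 * v + d - b), mem_triangle.2 (by lia), by lia, by lia, by lia⟩

lemma contract_triangle_zero_zero : contract (triangle N) 0 0 = triangle ((N + 1) / 2) := by
  ext ⟨u, v⟩
  rw [mem_contract, mem_triangle]
  constructor
  · rintro ⟨q, hq, -, rfl, rfl⟩
    rw [mem_triangle] at hq
    lia
  · exact fun h => exists_mem_triangle_of_digits 0 0 (by lia) (by lia) (by lia) (by lia)

-- A unit on a side of the contracted window is seen only through its lower row.
lemma mem_contract_triangle_one_one : (u, v) ∈ contract (triangle N) 1 1 ↔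
    u + v ≠ 0 ∧ 2 * (u + v) < N + 2 ∧ (u = 0 ∨ v = 0 → 2 * (u + v) < N + 1) := by
  rw [mem_contract]
  constructor
  · rintro ⟨q, hq, hcarry, rfl, rfl⟩
    rw [mem_triangle] at hq
    lia
  · rintro ⟨h0, huv, hside⟩
    by_cases hu : u = 0
    · exact exists_mem_triangle_of_digits 1 0 (by lia) (by lia) (by lia) (by lia)
    by_cases hv : v = 0
    · exact exists_mem_triangle_of_digits 0 1 (by lia) (by lia) (by lia) (by lia)
    · exact exists_mem_triangle_of_digits 0 0 (by lia) (by lia) (by lia) (by lia)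

lemma contract_triangle_two_mul_one_one :
    contract (triangle (2 * n)) 1 1 = triangle (n + 1) \ {(0, 0)} := by
  ext ⟨u, v⟩
  simp only [mem_contract_triangle_one_one, mem_sdiff, mem_triangle, mem_singleton, Prod.mk.injEq]
  lia

lemma contract_triangle_two_mul_add_one_one_one :
    contract (triangle (2 * n + 1)) 1 1 =
      triangle (n + 2) \ {(0, 0), (n + 1, 0), (0, n + 1)} := by
  ext ⟨u, v⟩
  simp only [mem_contract_triangle_one_one, mem_sdiff, mem_triangle, mem_insert, mem_singleton,
    Prod.mk.injEq]
  lia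

/-! ### The threefold symmetry -/

/-- The rotation of `triangle N` by a third of a turn; junk outside `triangle N`. -/
def rotate (N : ℕ) (q : ℕ × ℕ) : ℕ × ℕ := (N - 1 - q.1 - q.2, q.1)

lemma rotate_mem_triangle {q : ℕ × ℕ} (hq : q ∈ triangle N) : rotate N q ∈ triangle N := by
  simp only [mem_triangle, rotate] at *
  lia

lemma rotate_rotate_rotate {q : ℕ × ℕ} (hq : q ∈ triangle N) :
    rotate N (rotate N (rotate N q)) = q := by
  rw [mem_triangle] at hq
  ext <;> simp only [rotate] <;> lia

lemma image_rotate_pattern {s z : ℕ} (h : x + y + z + N = 2 ^ s) :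
    (pattern (triangle N) x y).image (rotate N) = pattern (triangle N) z x := by
  have isFilled_rotate_iff {q : ℕ × ℕ} (hq : q ∈ triangle N) :
      IsFilled (x + q.1) (y + q.2) ↔ IsFilled (z + (rotate N q).1) (x + (rotate N q).2) := by
    rw [mem_triangle] at hq
    exact isFilled_rotate (s := s) (by simp only [rotate]; lia)
  ext q
  simp only [mem_image, mem_pattern]
  constructor
  · rintro ⟨q, ⟨hq, hfilled⟩, rfl⟩
    exact ⟨rotate_mem_triangle hq, (isFilled_rotate_iff hq).1 hfilled⟩
  · rintro ⟨hq, hfilled⟩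
    have hq' := rotate_mem_triangle (rotate_mem_triangle hq)
    refine ⟨_, ⟨hq', (isFilled_rotate_iff hq').2 ?_⟩, rotate_rotate_rotate hq⟩
    rwa [rotate_rotate_rotate hq]

lemma image_rotate_mem_parityClass (hp : p ∈ parityClass (triangle N) a b) :
    p.image (rotate N) ∈ parityClass (triangle N) ((a + b + N) % 2) a := by
  obtain ⟨x, y, rfl⟩ := mem_parityClass.1 hp
  have hlt : 2 * x + a + (2 * y + b) + N < 2 ^ (2 * x + a + (2 * y + b) + N) := Nat.lt_two_pow_self
  set s := 2 * x + a + (2 * y + b) + N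
  have hs : 2 ^ (s + 1) = 2 * 2 ^ s := pow_succ' 2 s
  refine mem_parityClass.2 ⟨(2 ^ (s + 1) - s) / 2, x, (image_rotate_pattern (s := s + 1) ?_).symm⟩
  lia

lemma image_rotate_injOn : Set.InjOn (image (rotate N)) {p | p ⊆ triangle N} := by
  have rotate_injOn : Set.InjOn (rotate N) (triangle N) :=
    Set.LeftInvOn.injOn (f₁' := rotate N ∘ rotate N) fun q hq => rotate_rotate_rotate hq
  exact fun p hp p' hp' h => image_injOn_powerset_of_injOn rotate_injOn
    (by simpa using hp) (by simpa using hp') h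

theorem card_parityClass_rotate (ha : a < 2) (hb : b < 2) :
    #(parityClass (triangle N) a b) = #(parityClass (triangle N) ((a + b + N) % 2) a) := by
  have card_le (a b : ℕ) :
      #(parityClass (triangle N) a b) ≤ #(parityClass (triangle N) ((a + b + N) % 2) a) :=
    card_le_card_of_injOn (image (rotate N)) (fun p hp => image_rotate_mem_parityClass hp)
      (image_rotate_injOn.mono fun p hp =>
        subset_of_mem_patterns (mem_patterns_of_mem_parityClass hp))
  refine (card_le a b).antisymm ?_
  calc #(parityClass (triangle N) ((a + b + N) % 2) a)
      ≤ #(parityClass (triangle N) b ((a + b + N) % 2)) := by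
        convert card_le ((a + b + N) % 2) a using 3; lia
    _ ≤ #(parityClass (triangle N) a b) := by
        convert card_le b ((a + b + N) % 2) using 3; lia

/-! ### Patterns shared by several parity classes -/

lemma not_carry_of_mem (hp : p ∈ parityClass C a b) (huv : (u, v) ∈ p) :
    ¬((u + a) % 2 = 1 ∧ (v + b) % 2 = 1) := by
  obtain ⟨x, y, rfl⟩ := mem_parityClass.1 hp
  exact (isFilled_two_mul_add.1 (mem_pattern.1 huv).2).2

lemma mem_of_mem_of_div_two_eq (hp : p ∈ parityClass C a b) (huv : (u, v) ∈ p)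
    (hu : (u' + a) / 2 = (u + a) / 2) (hv : (v' + b) / 2 = (v + b) / 2)
    (hcarry : ¬((u' + a) % 2 = 1 ∧ (v' + b) % 2 = 1)) (hC : (u', v') ∈ C) : (u', v') ∈ p := by
  obtain ⟨x, y, rfl⟩ := mem_parityClass.1 hp
  rw [mem_pattern, isFilled_two_mul_add] at huv ⊢
  exact ⟨hC, by rw [hu, hv]; exact huv.2.1, hcarry⟩

-- Each filled block of one class contains a unit that is unfilled for the other class.
lemma notMem_of_mem_parityClass_of_mem_parityClass (hp : p ∈ parityClass C a b)
    (hp' : p ∈ parityClass C a' b') (huv : (u, v) ∈ p) (hu : (u' + a) / 2 = (u + a) / 2)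
    (hv : (v' + b) / 2 = (v + b) / 2) (hcarry : ¬((u' + a) % 2 = 1 ∧ (v' + b) % 2 = 1))
    (hcarry' : (u' + a') % 2 = 1 ∧ (v' + b') % 2 = 1) : (u', v') ∉ C :=
  fun hC => not_carry_of_mem hp' (mem_of_mem_of_div_two_eq hp huv hu hv hcarry hC) hcarry'

lemma eq_zero_of_mem_of_mem_parityClass (hp : p ∈ parityClass (triangle N) a b)
    (hp' : p ∈ parityClass (triangle N) a' b') (ha : a % 2 ≠ a' % 2) (hb : b % 2 ≠ b' % 2)
    (huv : (u, v) ∈ p) (hu : (u + a) % 2 = 1) (hv : (v + b) % 2 = 0) : u = 0 ∧ v = 0 := by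
  have hN := mem_triangle.1 (subset_of_mem_patterns (mem_patterns_of_mem_parityClass hp) huv)
  constructor
  · by_contra hu0
    exact notMem_of_mem_parityClass_of_mem_parityClass hp hp' huv (u' := u - 1) (v' := v)
      (by lia) (by lia) (by lia) (by lia) (mem_triangle.2 (by lia))
  · by_contra hv0
    exact notMem_of_mem_parityClass_of_mem_parityClass hp' hp huv (u' := u) (v' := v - 1)
      (by lia) (by lia) (by lia) (by lia) (mem_triangle.2 (by lia))

lemma subset_apex_of_mem_parityClass_of_mem_parityClass
    (hp : p ∈ parityClass (triangle N) a b) (hp' : p ∈ parityClass (triangle N) a' b')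
    (ha : a % 2 ≠ a' % 2) (hb : b % 2 ≠ b' % 2) : p ⊆ {(0, 0)} := by
  rintro ⟨u, v⟩ huv
  have carry := not_carry_of_mem hp huv
  have carry' := not_carry_of_mem hp' huv
  rw [mem_singleton, Prod.mk.injEq]
  by_cases hu : (u + a) % 2 = 1
  · exact eq_zero_of_mem_of_mem_parityClass hp hp' ha hb huv hu (by lia)
  · exact eq_zero_of_mem_of_mem_parityClass hp' hp ha.symm hb.symm huv (by lia) (by lia)

/-- The patterns of `triangle N` with a single filled unit, placed at one of the corners. -/
def corners (N : ℕ) : Finset (Finset (ℕ × ℕ)) := {{(0, 0)}, {(N - 1, 0)}, {(0, N - 1)}}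

lemma mem_corners : p ∈ corners N ↔ p = {(0, 0)} ∨ p = {(N - 1, 0)} ∨ p = {(0, N - 1)} := by
  simp [corners]

lemma card_corners (hN : 2 ≤ N) : #(corners N) = 3 := by
  have : N - 1 ≠ 0 := by lia
  refine card_eq_three.2 ⟨_, _, _, ?_, ?_, ?_, rfl⟩ <;> simp [this, this.symm]

lemma eq_empty_or_eq_of_image_rotate_subset {q : ℕ × ℕ} (hp : p ⊆ triangle N)
    (h : p.image (rotate N) ⊆ {q}) : p = ∅ ∨ p = {rotate N (rotate N q)} := by
  rw [← subset_singleton_iff]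
  intro q' hq'
  rw [mem_singleton, ← mem_singleton.1 (h (mem_image_of_mem _ hq')),
    rotate_rotate_rotate (hp hq')]

theorem eq_empty_or_mem_corners_of_mem_parityClass (hp : p ∈ parityClass (triangle N) a b)
    (hp' : p ∈ parityClass (triangle N) a' b') (hne : ¬(a % 2 = a' % 2 ∧ b % 2 = b' % 2)) :
    p = ∅ ∨ p ∈ corners N := by
  have rotated := image_rotate_mem_parityClass hp
  have rotated' := image_rotate_mem_parityClass hp'
  have hpN := subset_of_mem_patterns (mem_patterns_of_mem_parityClass hp)
  rw [mem_corners]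
  by_cases ha : a % 2 = a' % 2
  · have hsub := subset_apex_of_mem_parityClass_of_mem_parityClass
      (image_rotate_mem_parityClass rotated) (image_rotate_mem_parityClass rotated')
      (by lia) (by lia)
    rcases eq_empty_or_eq_of_image_rotate_subset
      (subset_of_mem_patterns (mem_patterns_of_mem_parityClass rotated)) hsub with h | h
    · exact .inl (image_eq_empty.1 h)
    · exact (eq_empty_or_eq_of_image_rotate_subset hpN h.subset).imp_right
        fun h => .inr (.inl (by simpa [rotate] using h))
  by_cases hb : b % 2 = b' % 2
  · have hsub := subset_apex_of_mem_parityClass_of_mem_parityClass rotated rotated'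
      (by lia) (by lia)
    rcases eq_empty_or_eq_of_image_rotate_subset hpN hsub with h | h
    · exact .inl h
    · exact .inr (.inr (.inr (by simpa [rotate] using h)))
  · have hsub := subset_apex_of_mem_parityClass_of_mem_parityClass hp hp' ha hb
    exact (subset_singleton_iff.1 hsub).imp_right .inl

lemma empty_mem_parityClass (ha : a < 2) (hb : b < 2) : ∅ ∈ parityClass (triangle N) a b := by
  have hN : N + 1 < 2 ^ (N + 1) := Nat.lt_two_pow_self
  refine mem_parityClass.2 ⟨2 ^ N, 2 ^ N, filter_eq_empty_iff.2 fun q hq => ?_⟩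
  rw [mem_triangle] at hq
  exact not_isFilled_of_two_pow_le_add (s := N + 2) (by lia) (by lia) (by lia)

lemma apex_mem_parityClass (hN : 1 ≤ N) (hab : a + b = 1) :
    {(0, 0)} ∈ parityClass (triangle N) a b := by
  have hlt : N + 1 < 2 ^ (N + 1) := Nat.lt_two_pow_self
  refine mem_parityClass.2 ⟨2 ^ N - a, 2 ^ N - b, ?_⟩
  ext q
  rw [mem_pattern, mem_triangle, mem_singleton, Prod.ext_iff]
  constructor
  · rintro ⟨hq, hfilled⟩
    by_contra h0
    exact not_isFilled_of_two_pow_le_add (s := N + 2) (by lia) (by lia) (by lia) hfilled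
  · rintro ⟨h1, h2⟩
    exact ⟨by lia, isFilled_of_add_add_one_eq_two_pow (s := N + 2) (by lia)⟩

lemma apex_mem_parityClass_iff (hN : 2 ≤ N) (ha : a < 2) (hb : b < 2) :
    {(0, 0)} ∈ parityClass (triangle N) a b ↔ a + b = 1 := by
  refine ⟨fun h => ?_, apex_mem_parityClass (by lia)⟩
  have carry := not_carry_of_mem h (mem_singleton_self (0, 0))
  by_contra hab
  have : (1, 0) ∈ ({(0, 0)} : Finset (ℕ × ℕ)) :=
    mem_of_mem_of_div_two_eq h (mem_singleton_self (0, 0)) (by lia) rfl (by lia)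
      (mem_triangle.2 (by lia))
  simp at this

/-! ### Counting -/

/-- The residues modulo `2` of positions; they index the parity classes. -/
abbrev residues : Finset (ℕ × ℕ) := range 2 ×ˢ range 2

/-- The residues of the positions at which `p` occurs as a pattern of `triangle N`. -/
noncomputable def residuesOf (N : ℕ) (p : Finset (ℕ × ℕ)) : Finset (ℕ × ℕ) :=
  {e ∈ residues | p ∈ parityClass (triangle N) e.1 e.2}

lemma mem_residuesOf {e : ℕ × ℕ} :
    e ∈ residuesOf N p ↔ (e.1 < 2 ∧ e.2 < 2) ∧ p ∈ parityClass (triangle N) e.1 e.2 := by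
  simp [residuesOf]

lemma residuesOf_empty : residuesOf N ∅ = residues :=
  filter_true_of_mem fun e he => by
    rw [mem_product, mem_range, mem_range] at he
    exact empty_mem_parityClass he.1 he.2

lemma residuesOf_apex (hN : 2 ≤ N) : residuesOf N {(0, 0)} = {(0, 1), (1, 0)} := by
  ext ⟨a, b⟩
  simp only [mem_residuesOf, mem_insert, mem_singleton, Prod.mk.injEq]
  constructor
  · rintro ⟨⟨ha, hb⟩, h⟩
    have := (apex_mem_parityClass_iff hN ha hb).1 h
    lia
  · intro h
    exact ⟨by lia, apex_mem_parityClass (by lia) (by lia)⟩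

lemma card_residuesOf_le_image_rotate :
    #(residuesOf N p) ≤ #(residuesOf N (p.image (rotate N))) := by
  refine card_le_card_of_injOn (fun e => ((e.1 + e.2 + N) % 2, e.1)) (fun e he => ?_) ?_
  · obtain ⟨⟨h1, -⟩, hp⟩ := mem_residuesOf.1 he
    exact mem_residuesOf.2 ⟨⟨Nat.mod_lt _ two_pos, h1⟩, image_rotate_mem_parityClass hp⟩
  · intro e he e' he' h
    have hlt := (mem_residuesOf.1 he).1
    have hlt' := (mem_residuesOf.1 he').1
    rw [Prod.mk.injEq] at h
    ext <;> lia

lemma card_residuesOf_of_mem_corners (hN : 2 ≤ N) (hp : p ∈ corners N) :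
    #(residuesOf N p) = 2 := by
  have apex : #(residuesOf N {(0, 0)}) = 2 := by rw [residuesOf_apex hN]; rfl
  have apex_le_left := card_residuesOf_le_image_rotate (N := N) (p := {(0, 0)})
  have left_le_right := card_residuesOf_le_image_rotate (N := N) (p := {(N - 1, 0)})
  have right_le_apex := card_residuesOf_le_image_rotate (N := N) (p := {(0, N - 1)})
  simp only [image_singleton, rotate, Nat.sub_zero, Nat.sub_self] at *
  rcases mem_corners.1 hp with rfl | rfl | rfl <;> lia

lemma card_residuesOf_of_notMem_corners (hp : p ∈ patterns (triangle N)) (hp0 : p ≠ ∅)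
    (hcorners : p ∉ corners N) : #(residuesOf N p) = 1 := by
  obtain ⟨a, ha, b, hb, hab⟩ := exists_mem_parityClass hp
  refine card_eq_one.2 ⟨(a, b), eq_singleton_iff_unique_mem.2
    ⟨mem_residuesOf.2 ⟨⟨ha, hb⟩, hab⟩, fun e he => ?_⟩⟩
  obtain ⟨⟨h1, h2⟩, hp'⟩ := mem_residuesOf.1 he
  by_contra hne
  rw [Prod.ext_iff] at hne
  rcases eq_empty_or_mem_corners_of_mem_parityClass hp' hab (by lia) with h | h
  · exact hp0 h
  · exact hcorners h

lemma card_residuesOf (hN : 2 ≤ N) (hp : p ∈ patterns (triangle N)) :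
    #(residuesOf N p) = 1 + (if p = ∅ then 3 else 0) + (if p ∈ corners N then 1 else 0) := by
  by_cases hp0 : p = ∅
  · subst hp0
    have : ∅ ∉ corners N := by simp [mem_corners]
    rw [residuesOf_empty, if_pos rfl, if_neg this]
    rfl
  by_cases hcorners : p ∈ corners N
  · rw [card_residuesOf_of_mem_corners hN hcorners, if_neg hp0, if_pos hcorners]
  · rw [card_residuesOf_of_notMem_corners hp hp0 hcorners, if_neg hp0, if_neg hcorners]

lemma corners_subset_patterns (hN : 2 ≤ N) : corners N ⊆ patterns (triangle N) := by
  intro p hp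
  have : 0 < #(residuesOf N p) := by rw [card_residuesOf_of_mem_corners hN hp]; exact two_pos
  obtain ⟨e, he⟩ := card_pos.1 this
  exact mem_patterns_of_mem_parityClass (mem_residuesOf.1 he).2

theorem card_patterns_triangle_add_six (hN : 2 ≤ N) :
    #(patterns (triangle N)) + 6 = ∑ e ∈ residues, #(parityClass (triangle N) e.1 e.2) := by
  have empty_mem : ∅ ∈ patterns (triangle N) :=
    mem_patterns_of_mem_parityClass (empty_mem_parityClass two_pos two_pos)
  have parityClass_eq (e : ℕ × ℕ) : parityClass (triangle N) e.1 e.2 =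
      {p ∈ patterns (triangle N) | p ∈ parityClass (triangle N) e.1 e.2} := by
    ext p
    simpa using mem_patterns_of_mem_parityClass
  symm
  calc ∑ e ∈ residues, #(parityClass (triangle N) e.1 e.2)
      = ∑ p ∈ patterns (triangle N), #(residuesOf N p) := by
        rw [sum_congr rfl fun e _ => congrArg card (parityClass_eq e)]
        exact sum_card_bipartiteAbove_eq_sum_card_bipartiteBelow _
    _ = ∑ p ∈ patterns (triangle N),
          (1 + (if p = ∅ then 3 else 0) + (if p ∈ corners N then 1 else 0)) :=
        sum_congr rfl fun p hp => card_residuesOf hN hp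
    _ = #(patterns (triangle N)) + 6 := by
        rw [sum_add_distrib, sum_add_distrib, sum_ite_eq', if_pos empty_mem, ← card_filter,
          filter_mem_eq_inter, inter_eq_right.2 (corners_subset_patterns hN), card_corners hN]
        simp [add_assoc]

/-! ### Row and column coordinates -/

/-- The row and column of the unit `(u, v)` relative to the apex of a window. -/
def gridCell (q : ℕ × ℕ) : ℕ × ℕ := (q.1 + q.2, 2 * q.1)

lemma gridCell_injective : Function.Injective gridCell := by
  rintro ⟨u, v⟩ ⟨u', v'⟩ h
  rw [gridCell, gridCell, Prod.mk.injEq] at h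
  rw [Prod.mk.injEq]
  lia

/-- A pattern as a Boolean-valued function of row and column. -/
def toGrid (p : Finset (ℕ × ℕ)) (q : ℕ × ℕ) : Bool := decide (q ∈ p.image gridCell)

lemma toGrid_apply : toGrid p (u + v, 2 * u) = decide ((u, v) ∈ p) :=
  decide_eq_decide.2 (gridCell_injective.mem_finset_image (a := (u, v)))

lemma toGrid_injective : Function.Injective toGrid := by
  intro p p' h
  ext ⟨u, v⟩
  rw [← decide_eq_decide, ← toGrid_apply, ← toGrid_apply, h]

lemma filled_add_two_mul : filled (x + y) (2 * x) = decide (IsFilled x y) := by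
  simp [filled, IsFilled, Nat.odd_iff]

lemma filled_of_odd {r c : ℕ} (hc : c % 2 = 1) : filled r c = false := by
  simp [filled, hc]

section Window

variable {W : ℕ × ℕ → Prop} [DecidablePred W]

lemma toGrid_pattern (hW : ∀ k m, W (k, m) → m ≤ 2 * k)
    (hC : ∀ u v, (u, v) ∈ C ↔ W (u + v, 2 * u)) :
    toGrid (pattern C x y) =
      fun q => if W q then filled (x + y + q.1) (2 * x + q.2) else false := by
  funext ⟨k, m⟩
  by_cases hkm : W (k, m)
  · rw [if_pos hkm]
    rcases Nat.mod_two_eq_zero_or_one m with hm | hm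
    · obtain ⟨u, v, rfl, rfl⟩ : ∃ u v, u + v = k ∧ 2 * u = m := by
        have := hW k m hkm
        exact ⟨m / 2, k - m / 2, by lia, by lia⟩
      rw [toGrid_apply, show x + y + (u + v) = x + u + (y + v) by lia, ← mul_add,
        filled_add_two_mul]
      simp [(hC u v).2 hkm]
    · rw [filled_of_odd (by lia)]
      simp only [toGrid, mem_image, gridCell, decide_eq_false_iff_not]
      rintro ⟨q, -, hq⟩
      rw [Prod.mk.injEq] at hq
      lia
  · rw [if_neg hkm]
    simp only [toGrid, mem_image, decide_eq_false_iff_not]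
    rintro ⟨q, hq, h⟩
    exact hkm (h ▸ (hC q.1 q.2).1 (pattern_subset hq))

theorem ncard_setOf_filled_window (hW : ∀ k m, W (k, m) → m ≤ 2 * k)
    (hC : ∀ u v, (u, v) ∈ C ↔ W (u + v, 2 * u)) :
    {f : ℕ × ℕ → Bool | ∃ r c : ℕ, c % 2 = 0 ∧ c ≤ 2 * r ∧
      f = fun q => if W q then filled (r + q.1) (c + q.2) else false}.ncard = #(patterns C) := by
  rw [← Set.ncard_coe_finset, ← Set.ncard_image_of_injective _ toGrid_injective]
  congr 1
  ext f
  simp only [Set.mem_ofPred_eq, Set.mem_image, mem_coe, mem_patterns]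
  constructor
  · rintro ⟨r, c, hc, hcr, rfl⟩
    obtain ⟨x, y, rfl, rfl⟩ : ∃ x y, x + y = r ∧ 2 * x = c :=
      ⟨c / 2, r - c / 2, by lia, by lia⟩
    exact ⟨_, ⟨x, y, rfl⟩, toGrid_pattern hW hC⟩
  · rintro ⟨_, ⟨x, y, rfl⟩, rfl⟩
    exact ⟨x + y, 2 * x, by lia, by lia, toGrid_pattern hW hC⟩

end Window

lemma ncard_Pup : (Pup n).ncard = #(patterns (triangle n)) :=
  ncard_setOf_filled_window (W := fun q => q.1 < n ∧ q.2 ≤ 2 * q.1) (fun _ _ h => h.2)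
    fun u v => by rw [mem_triangle]; lia

lemma ncard_PtopCut :
    (PtopCut (n + 1)).ncard = #(patterns (triangle (n + 1) \ {(0, 0)})) :=
  ncard_setOf_filled_window (W := fun q => 1 ≤ q.1 ∧ q.1 < n + 1 ∧ q.2 ≤ 2 * q.1)
    (fun _ _ h => h.2.2) fun u v => by
      simp only [mem_sdiff, mem_triangle, mem_singleton, Prod.mk.injEq]
      lia

lemma ncard_PfullyCut : (PfullyCut (n + 2)).ncard =
    #(patterns (triangle (n + 2) \ {(0, 0), (n + 1, 0), (0, n + 1)})) :=
  ncard_setOf_filled_window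
    (W := fun q => (q.1 < n + 2 ∧ q.2 ≤ 2 * q.1) ∧ q ≠ (0, 0) ∧
      ¬(q.1 = n + 2 - 1 ∧ (q.2 = 0 ∨ q.2 = 2 * (n + 2 - 1))))
    (fun _ _ h => h.1.2) fun u v => by
      simp only [mem_sdiff, mem_triangle, mem_insert, mem_singleton, Prod.mk.injEq, ne_eq]
      lia

lemma sum_residues (f : ℕ → ℕ → ℕ) :
    ∑ e ∈ residues, f e.1 e.2 = f 0 0 + f 0 1 + f 1 0 + f 1 1 := by
  simp [sum_product, sum_range_succ, add_assoc]

lemma sum_card_parityClass_triangle_two_mul :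
    ∑ e ∈ residues, #(parityClass (triangle (2 * n)) e.1 e.2) =
      #(parityClass (triangle (2 * n)) 0 0) + 3 * #(parityClass (triangle (2 * n)) 1 1) := by
  have h10 := card_parityClass_rotate (N := 2 * n) (a := 1) (b := 0) one_lt_two two_pos
  have h01 := card_parityClass_rotate (N := 2 * n) (a := 0) (b := 1) two_pos one_lt_two
  rw [show (1 + 0 + 2 * n) % 2 = 1 by lia] at h10
  rw [show (0 + 1 + 2 * n) % 2 = 1 by lia] at h01
  rw [sum_residues fun a b => #(parityClass (triangle (2 * n)) a b)]
  lia

lemma sum_card_parityClass_triangle_two_mul_add_one :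
    ∑ e ∈ residues, #(parityClass (triangle (2 * n + 1)) e.1 e.2) =
      3 * #(parityClass (triangle (2 * n + 1)) 0 0) +
        #(parityClass (triangle (2 * n + 1)) 1 1) := by
  have h00 := card_parityClass_rotate (N := 2 * n + 1) (a := 0) (b := 0) two_pos two_pos
  have h01 := card_parityClass_rotate (N := 2 * n + 1) (a := 0) (b := 1) two_pos one_lt_two
  rw [show (0 + 0 + (2 * n + 1)) % 2 = 1 by lia] at h00
  rw [show (0 + 1 + (2 * n + 1)) % 2 = 0 by lia] at h01
  rw [sum_residues fun a b => #(parityClass (triangle (2 * n + 1)) a b)]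
  lia

end Sierpinski

open Sierpinski in
theorem sierpinski_recursion_A_general (n : ℕ) (hn : 1 ≤ n) :
    (Pup (2 * n)).ncard + 6 = (Pup n).ncard + 3 * (PtopCut (n + 1)).ncard ∧
    (Pup (2 * n + 1)).ncard + 6 = 3 * (Pup (n + 1)).ncard + (PfullyCut (n + 2)).ncard := by
  constructor
  · rw [ncard_Pup, card_patterns_triangle_add_six (by lia),
      sum_card_parityClass_triangle_two_mul, card_parityClass, card_parityClass,
      contract_triangle_zero_zero, show (2 * n + 1) / 2 = n by lia,
      contract_triangle_two_mul_one_one, ncard_Pup, ncard_PtopCut]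
  · rw [ncard_Pup, card_patterns_triangle_add_six (by lia),
      sum_card_parityClass_triangle_two_mul_add_one, card_parityClass, card_parityClass,
      contract_triangle_zero_zero, show (2 * n + 1 + 1) / 2 = n + 1 by lia,
      contract_triangle_two_mul_add_one_one_one, ncard_Pup, ncard_PfullyCut]

theorem sierpinski_recursion_A (n : ℕ) (hn : 2 ≤ n) :
    (Pup (2 * n)).ncard + 6 = (Pup n).ncard + 3 * (PtopCut (n + 1)).ncard ∧
    (Pup (2 * n + 1)).ncard + 6 = 3 * (Pup (n + 1)).ncard + (PfullyCut (n + 2)).ncard :=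
  sierpinski_recursion_A_general n (by lia)
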